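/- arXiv:2507.08796 — 2 statements merged into one kernel-verified Lean document; each statement's English description precedes it below -/
import Mathlib

section
/- Let f be a natural filter-equivariant polymorphic list function and let k be the length of f applied to a one-element list (say k = (f Unit [()]).length). Then for every type α with decidable equality and every list xs : List α, the length of f α xs equals k times the length of xs; moreover, for every x : α, if x occurs m times in xs then x occurs k * m times in f α xs (i.e. (f α xs).count x = k * xs.count x). -/
/-- A function `f : List α → List α` is filter-equivariant if it commutes with
`List.filter p` for every Boolean predicate `p`. -/
def FilterEquivariant {α : Type} (f : List α → List α) : Prop :=
  ∀ (p : α → Bool) (xs : List α), f (xs.filter p) = (f xs).filter p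

/-- A polymorphic list function is natural (map-equivariant) if it commutes with
`List.map g` for every `g`. -/
def Natural (f : ∀ α : Type, List α → List α) : Prop :=
  ∀ (α β : Type) (g : α → β) (xs : List α), f β (xs.map g) = (f α xs).map g

/-- A polymorphic list function is natural filter-equivariant (NFE) if it is natural
and each component is filter-equivariant. -/
def NFE (f : ∀ α : Type, List α → List α) : Prop :=
  Natural f ∧ ∀ α : Type, FilterEquivariant (f α)

/-! Filter-equivariance splits the output along any predicate. Marking the two halves of `xs ++ ys`
by the summands of `α ⊕ α`, which naturality allows, makes them separable by a predicate, so the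
length of the output is additive in the input; it is then determined by singletons, all of which are
images of `[()]`. Occurrences of `x` are counted by filtering first and taking lengths. -/

theorem Natural.length_apply_map {f : ∀ α : Type, List α → List α} (hf : Natural f)
    {α β : Type} (g : α → β) (xs : List α) :
    (f β (xs.map g)).length = (f α xs).length := by
  rw [hf, List.length_map]

namespace FilterEquivariant

variable {α : Type} {f : List α → List α}

theorem apply_nil (hf : FilterEquivariant f) : f [] = [] := by
  simpa using hf (fun _ => false) []

theorem countP_apply_eq_length_apply_filter (hf : FilterEquivariant f) (p : α → Bool)
    (xs : List α) :
    (f xs).countP p = (f (xs.filter p)).length := by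
  rw [hf, List.countP_eq_length_filter]

theorem length_apply_filter_add_length_apply_filter_not (hf : FilterEquivariant f) (p : α → Bool)
    (xs : List α) :
    (f (xs.filter p)).length + (f (xs.filter (!p ·))).length = (f xs).length := by
  rw [← hf.countP_apply_eq_length_apply_filter, ← hf.countP_apply_eq_length_apply_filter,
    List.length_eq_countP_add_countP p]
  simp only [Bool.not_eq_true, Bool.decide_eq_false]

end FilterEquivariant

namespace NFE

variable {f : ∀ α : Type, List α → List α} {α : Type}

theorem length_apply_map_inl_append_map_inr (hf : NFE f) {β : Type} (xs : List α) (ys : List β) :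
    (f (α ⊕ β) (xs.map Sum.inl ++ ys.map Sum.inr)).length =
      (f α xs).length + (f β ys).length := by
  set zs := xs.map Sum.inl ++ ys.map Sum.inr with zs_def
  have filter_isLeft : zs.filter Sum.isLeft = xs.map Sum.inl := by
    simp [zs_def, List.filter_map, Function.comp_def]
  have filter_not_isLeft : zs.filter (!Sum.isLeft ·) = ys.map Sum.inr := by
    simp [zs_def, List.filter_map, Function.comp_def]
  rw [← (hf.2 _).length_apply_filter_add_length_apply_filter_not Sum.isLeft, filter_isLeft,
    filter_not_isLeft, hf.1.length_apply_map, hf.1.length_apply_map]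

theorem length_apply_append (hf : NFE f) (xs ys : List α) :
    (f α (xs ++ ys)).length = (f α xs).length + (f α ys).length := by
  have forget_labels :
      (xs.map Sum.inl ++ ys.map Sum.inr).map (Sum.elim id id) = xs ++ ys := by simp
  rw [← forget_labels, hf.1.length_apply_map, hf.length_apply_map_inl_append_map_inr]

theorem length_apply (hf : NFE f) (xs : List α) :
    (f α xs).length = (f Unit [()]).length * xs.length := by
  induction xs with
  | nil => simp [(hf.2 α).apply_nil]
  | cons x xs ih =>
    have length_singleton : (f α [x]).length = (f Unit [()]).length :=
      hf.1.length_apply_map (fun _ => x) [()]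
    rw [← List.singleton_append, hf.length_apply_append, length_singleton, ih, List.length_append,
      List.length_singleton, Nat.mul_add, Nat.mul_one]

theorem countP_apply (hf : NFE f) (p : α → Bool) (xs : List α) :
    (f α xs).countP p = (f Unit [()]).length * xs.countP p := by
  rw [(hf.2 α).countP_apply_eq_length_apply_filter, hf.length_apply, List.countP_eq_length_filter]

end NFE

theorem nfe_length_and_count (f : ∀ α : Type, List α → List α) (hf : NFE f)
    (k : ℕ) (hk : k = (f Unit [()]).length)
    (α : Type) [DecidableEq α] (xs : List α) :
    (f α xs).length = k * xs.length ∧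
    ∀ x : α, (f α xs).count x = k * xs.count x := by
  subst hk
  exact ⟨hf.length_apply xs, fun x => hf.countP_apply (· == x) xs⟩
end

section
/- Let f be a natural filter-equivariant polymorphic list function that maps singleton lists to lists of length 1 (a 1-NFE, i.e. (f Unit [()]).length = 1). Then either f α is the identity function on List α for every type α, or f α is List.reverse for every type α. -/
/-!
A word is determined by its projections onto pairs of letters. Hence a filter-equivariant function
is determined on duplicate-free lists by its values on lists with at most two entries; by naturality
those values all come from the single list `[false, true]`, and every list is a relabelling of a
duplicate-free one. So an NFE is determined by its value at `[false, true]`, which for a 1-NFE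
contains each of the two letters once: either order is possible, and the identity and the reversal
realise them.
-/

theorem eq_of_forall_filter_pair_eq {α : Type*} [DecidableEq α] {l₁ l₂ : List α}
    (h : ∀ a b, l₁.filter (fun x => x = a ∨ x = b) = l₂.filter (fun x => x = a ∨ x = b)) :
    l₁ = l₂ := by
  induction l₁ generalizing l₂ with
  | nil =>
    cases l₂ with
    | nil => rfl
    | cons y t => simpa using h y y
  | cons x s ih =>
    cases l₂ with
    | nil => simpa using h x x
    | cons y t =>
      obtain rfl : x = y := by
        have hxy := h x y
        simp only [List.filter_cons, true_or, or_true, decide_true, if_true] at hxy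
        exact (List.cons.inj hxy).1
      have hst : s = t := ih fun a b => by
        have hab := h a b
        simp only [List.filter_cons] at hab
        split_ifs at hab
        · exact (List.cons.inj hab).2
        · exact hab
      rw [hst]

theorem length_filter_pair_le_two {α : Type*} [DecidableEq α] {l : List α} (hl : l.Nodup)
    (a b : α) : (l.filter (fun x => x = a ∨ x = b)).length ≤ 2 := by
  have hsub : l.filter (fun x => x = a ∨ x = b) ⊆ [a, b] := fun x hx => by
    simpa using List.of_mem_filter hx
  exact ((hl.filter _).subperm hsub).length_le

theorem FilterEquivariant.apply_nil_s5 {α : Type} {f : List α → List α} (hf : FilterEquivariant f) :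
    f [] = [] := by
  simpa using hf (fun _ => false) []

theorem FilterEquivariant.apply_eq_of_nodup {α : Type} {f g : List α → List α}
    (hf : FilterEquivariant f) (hg : FilterEquivariant g)
    (h : ∀ ys : List α, ys.length ≤ 2 → f ys = g ys) {xs : List α} (hxs : xs.Nodup) :
    f xs = g xs := by
  classical
  refine eq_of_forall_filter_pair_eq fun a b => ?_
  rw [← hf, ← hg]
  exact h _ (length_filter_pair_le_two hxs a b)

theorem Natural.apply_singleton {f : ∀ α : Type, List α → List α} (hf : Natural f) {α : Type}
    (a : α) : f α [a] = List.replicate (f Unit [()]).length a := by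
  simpa using hf Unit α (fun _ => a) [()]

theorem Natural.apply_eq_of_apply_finRange_eq {f g : ∀ α : Type, List α → List α}
    (hf : Natural f) (hg : Natural g)
    (h : ∀ n, f (Fin n) (List.finRange n) = g (Fin n) (List.finRange n)) (α : Type)
    (xs : List α) : f α xs = g α xs := by
  rw [← List.map_get_finRange xs, hf, hg, h]

namespace NFE

variable {f g : ∀ α : Type, List α → List α}

theorem id : NFE fun _ xs => xs :=
  ⟨fun _ _ _ _ => rfl, fun _ _ _ => rfl⟩

theorem reverse : NFE fun _ xs => xs.reverse :=
  ⟨fun _ _ _ _ => List.map_reverse.symm, fun _ _ _ => (List.filter_reverse ..).symm⟩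

theorem apply_eq_of_length_le_two (hf : NFE f) (hg : NFE g)
    (h : f Bool [false, true] = g Bool [false, true]) {α : Type} {xs : List α}
    (hxs : xs.length ≤ 2) : f α xs = g α xs := by
  have map_filter (p : Bool → Bool) (r : Bool → α) :
      f α (([false, true].filter p).map r) = g α (([false, true].filter p).map r) := by
    rw [hf.1, hf.2, h, ← hg.2, ← hg.1]
  match xs, hxs with
  | [], _ => rw [(hf.2 α).apply_nil_s5, (hg.2 α).apply_nil_s5]
  | [a], _ => exact map_filter (· = true) fun _ => a
  | [a, b], _ => exact map_filter (fun _ => true) fun i => bif i then b else a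

theorem apply_eq_of_apply_false_true_eq (hf : NFE f) (hg : NFE g)
    (h : f Bool [false, true] = g Bool [false, true]) (α : Type) (xs : List α) :
    f α xs = g α xs :=
  hf.1.apply_eq_of_apply_finRange_eq hg.1 (fun n =>
    (hf.2 (Fin n)).apply_eq_of_nodup (hg.2 (Fin n))
      (fun _ => apply_eq_of_length_le_two hf hg h) (List.nodup_finRange n)) α xs

theorem count_apply_of_nodup (hf : NFE f) {α : Type} [DecidableEq α] {xs : List α}
    (hxs : xs.Nodup) (a : α) :
    (f α xs).count a = (f Unit [()]).length * xs.count a := by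
  have hfilter : (f α xs).filter (· == a) = f α (List.replicate (xs.count a) a) := by
    rw [← hf.2, List.filter_beq]
  rw [← List.count_filter (p := (· == a)) (beq_self_eq_true a), hfilter]
  obtain hcount | hcount :=
    Nat.le_one_iff_eq_zero_or_eq_one.mp (List.nodup_iff_count_le_one.mp hxs a)
  · rw [hcount, List.replicate_zero, (hf.2 α).apply_nil_s5, List.count_nil, mul_zero]
  · rw [hcount, List.replicate_one, hf.1.apply_singleton, List.count_replicate_self, mul_one]

theorem apply_perm_of_nodup (hf : NFE f) (h1 : (f Unit [()]).length = 1) {α : Type} {xs : List α}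
    (hxs : xs.Nodup) : (f α xs).Perm xs := by
  classical
  exact List.perm_iff_count.mpr fun a => by rw [hf.count_apply_of_nodup hxs, h1, one_mul]

end NFE

theorem one_nfe_is_id_or_reverse (f : ∀ α : Type, List α → List α) (hf : NFE f)
    (h1 : (f Unit [()]).length = 1) :
    (∀ (α : Type) (xs : List α), f α xs = xs) ∨
    (∀ (α : Type) (xs : List α), f α xs = xs.reverse) := by
  have hperm : (f Bool [false, true]).Perm [false, true] := hf.apply_perm_of_nodup h1 (by decide)
  rcases List.perm_pair.mp hperm with h | h
  · exact Or.inl (hf.apply_eq_of_apply_false_true_eq .id h)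
  · exact Or.inr (hf.apply_eq_of_apply_false_true_eq .reverse h)
end
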